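/- The factor complexity of the generalized pseudostandard word u_p = u(1^ω,(EERR)^ω) satisfies C(n) > 4n for all n ≥ 10. -/

import Mathlib

abbrev Word := List Bool

/-- The exchange antimorphism `E`: complement each letter and reverse. -/
def Ebar (w : Word) : Word := (w.map Bool.not).reverse

def IsPal (w : Word) : Prop := w.reverse = w
def IsEPal (w : Word) : Prop := Ebar w = w

open Classical in
lemma exists_minLength {Q : Word → Prop} (hex : ∃ v, Q v) :
    ∃ v, Q v ∧ ∀ v', Q v' → v.length ≤ v'.length := by
  classical
  have h : ∃ n, ∃ v, Q v ∧ v.length = n := ⟨_, hex.choose, hex.choose_spec, rfl⟩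
  obtain ⟨v, hv, hlen⟩ := Nat.find_spec h
  exact ⟨v, hv, fun v' hv' => by
    rw [hlen]; exact Nat.find_min' h ⟨v', hv', rfl⟩⟩

lemma pal_ext (w : Word) : ∃ v, w <+: v ∧ IsPal v :=
  ⟨w ++ w.reverse, List.prefix_append _ _, by simp [IsPal]⟩

lemma epal_ext (w : Word) : ∃ v, w <+: v ∧ IsEPal v :=
  ⟨w ++ Ebar w, List.prefix_append _ _, by
    simp [IsEPal, Ebar, List.map_reverse, List.map_map, Function.comp_def, Bool.not_not]⟩

/-- The palindromic closure: the shortest palindrome having `w` as a prefix. -/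
noncomputable def palCl (w : Word) : Word := (exists_minLength (pal_ext w)).choose

/-- The pseudopalindromic closure: the shortest `E`-palindrome having `w` as a prefix. -/
noncomputable def epalCl (w : Word) : Word := (exists_minLength (epal_ext w)).choose

/-- Prefixes of the generalized pseudostandard word `u(1^ω, (EERR)^ω)`
(the letter `1` is `true`). -/
noncomputable def wp : ℕ → Word
  | 0 => []
  | n+1 => if (n+1) % 4 = 1 ∨ (n+1) % 4 = 2
           then epalCl (wp n ++ [true])
           else palCl (wp n ++ [true])

/-- Factors of `u_p`. -/
def FactorUp (v : Word) : Prop := ∃ n, v <:+: wp n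

/-- Factor complexity of `u_p`. -/
noncomputable def Cp (n : ℕ) : ℕ := Set.ncard {v : Word | FactorUp v ∧ v.length = n}

/-!
Reflection in `w_n` turns the longest pseudopalindromic suffix of `w_n 1` into the longest
pseudopalindromic prefix of the same type that is followed by the right letter, so the length of
`w_{n+1}` can be read off the list of pseudopalindromic prefixes. Apart from `1` and `101` these are
the `w_j` themselves: a prefix of the wrong type between `w_n` and `w_{n+1}` would make the central
factor of `w_{n+1}` the complement of some `w_j`, but the two agree in a letter next to the centre.
This gives the recurrences
`|w_{n+1}| = 2 |w_n| + 2` for `n ≡ 0`, `|w_{n+1}| = 2 |w_n| - 3` for `n ≡ 2` modulo 4, and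
`|w_{n+1}| = 2 |w_n| - |w_{n-3}|` for odd `n`.

The set of factors is closed under complement, and every length greater than 5 has four left special
factors: the prefix of `u_p`, a word that agrees with `u_p` up to `w_{m+1}` and then continues with
the complement of what follows `w_m`, and the complements of these two. Hence
`C(n + 1) ≥ C(n) + 4`, and the bound follows from `C(10) ≥ 42`.
-/

section PseudoPalindrome

variable {e : Bool} {v w : Word}

/-- The antimorphism `R` (for `e = false`) or `E` (for `e = true`). -/
def mirror (e : Bool) (w : Word) : Word := (w.map fun a ↦ e ^^ a).reverse

/-- Words fixed by an antimorphism: palindromes for `e = false`, `E`-palindromes for `e = true`. -/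
abbrev IsPseudoPal (e : Bool) (w : Word) : Prop := mirror e w = w

lemma mirror_false : mirror false w = w.reverse := by simp [mirror]

lemma mirror_true : mirror true w = Ebar w := by simp [mirror, Ebar]

lemma isPseudoPal_false : IsPseudoPal false w ↔ IsPal w := by
  rw [IsPseudoPal, mirror_false, IsPal]

lemma isPseudoPal_true : IsPseudoPal true w ↔ IsEPal w := by
  rw [IsPseudoPal, mirror_true, IsEPal]

lemma length_mirror : (mirror e w).length = w.length := by simp [mirror]

lemma mirror_append : mirror e (v ++ w) = mirror e w ++ mirror e v := by simp [mirror]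

lemma mirror_mirror : mirror e (mirror e w) = w := by
  simp [mirror, Function.comp_def]

lemma mirror_false_mirror_true : mirror false (mirror true w) = w.map Bool.not := by
  simp [mirror_false, mirror_true, Ebar]

lemma isPseudoPal_map_range_iff (f : ℕ → Bool) (n : ℕ) :
    IsPseudoPal e ((List.range n).map f) ↔ ∀ i j, i + j + 1 = n → f i = (e ^^ f j) := by
  refine ⟨fun h i j hij ↦ ?_, fun h ↦ List.ext_getElem (by simp [mirror]) fun i hi hi' ↦ ?_⟩
  · have hi : i < ((List.range n).map f).length := by rw [List.length_map, List.length_range]; omega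
    have key := List.getElem_of_eq h.symm hi
    simpa [mirror, show n - 1 - i = j by omega] using key
  · have hn : i < n := by simpa using hi'
    simpa [mirror] using (h i (n - 1 - i) (by omega)).symm

/-- The number of letters of `w` before its longest pseudopalindromic suffix. -/
def overhang (e : Bool) (w : Word) : ℕ :=
  (List.range w.length).findIdx fun k ↦ IsPseudoPal e (w.drop k)

/-- The computable form of the closures `palCl` and `epalCl`: mirror the letters before the longest
pseudopalindromic suffix. -/
def pseudoClosure (e : Bool) (w : Word) : Word := w ++ mirror e (w.take (overhang e w))

lemma overhang_le_length : overhang e w ≤ w.length :=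
  List.findIdx_le_length.trans_eq List.length_range

lemma overhang_le {k : ℕ} (h : IsPseudoPal e (w.drop k)) : overhang e w ≤ k := by
  by_contra! hlt
  simpa [h] using List.not_of_lt_findIdx hlt

lemma isPseudoPal_drop_overhang : IsPseudoPal e (w.drop (overhang e w)) := by
  rcases overhang_le_length.lt_or_eq with h | h
  · rw [overhang] at h ⊢
    simpa using List.findIdx_getElem (w := h.trans_eq List.length_range.symm)
  · rw [h, List.drop_length]; rfl

lemma length_pseudoClosure : (pseudoClosure e w).length = w.length + overhang e w := by
  simp [pseudoClosure, length_mirror, overhang_le_length]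

lemma isPseudoPal_append_mirror_take {k : ℕ} (h : IsPseudoPal e (w.drop k)) :
    IsPseudoPal e (w ++ mirror e (w.take k)) := by
  have hw : mirror e w = w.drop k ++ mirror e (w.take k) := by
    conv_lhs => rw [← w.take_append_drop k, mirror_append, h]
  rw [IsPseudoPal, mirror_append, mirror_mirror, hw, ← List.append_assoc, List.take_append_drop]

lemma isPseudoPal_pseudoClosure : IsPseudoPal e (pseudoClosure e w) :=
  isPseudoPal_append_mirror_take isPseudoPal_drop_overhang

lemma exists_eq_append_mirror_take (hwv : w <+: v) (hv : IsPseudoPal e v)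
    (hlen : v.length ≤ 2 * w.length) :
    ∃ k ≤ w.length, IsPseudoPal e (w.drop k) ∧ v = w ++ mirror e (w.take k) := by
  obtain ⟨s, rfl⟩ := hwv
  have hk : s.length ≤ w.length := by simp only [List.length_append] at hlen; omega
  have hsplit : mirror e s ++ (mirror e (w.drop s.length) ++ mirror e (w.take s.length)) =
      w.take s.length ++ (w.drop s.length ++ s) := by
    rw [← mirror_append, ← List.append_assoc (w.take _), List.take_append_drop, ← mirror_append, hv]
  have hrest := (List.append_inj hsplit (by simp [length_mirror, hk])).2
  obtain ⟨hmid, hs⟩ := List.append_inj hrest length_mirror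
  exact ⟨s.length, hk, hmid, by rw [hs]⟩

lemma eq_pseudoClosure (hwv : w <+: v) (hv : IsPseudoPal e v)
    (hmin : ∀ v', w <+: v' ∧ IsPseudoPal e v' → v.length ≤ v'.length) :
    v = pseudoClosure e w := by
  have hle := hmin (pseudoClosure e w) ⟨List.prefix_append _ _, isPseudoPal_pseudoClosure⟩
  rw [length_pseudoClosure] at hle
  have hover := overhang_le_length (e := e) (w := w)
  obtain ⟨k, hk, hdrop, rfl⟩ := exists_eq_append_mirror_take hwv hv (by omega)
  have hk' : k = overhang e w := by
    simp only [List.length_append, length_mirror, List.length_take] at hle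
    have := overhang_le hdrop
    omega
  rw [hk', pseudoClosure]

lemma palCl_eq : palCl w = pseudoClosure false w := by
  obtain ⟨⟨hpre, hpal⟩, hmin⟩ := (exists_minLength (pal_ext w)).choose_spec
  exact eq_pseudoClosure hpre (isPseudoPal_false.2 hpal) fun v hv ↦
    hmin v ⟨hv.1, isPseudoPal_false.1 hv.2⟩

lemma epalCl_eq : epalCl w = pseudoClosure true w := by
  obtain ⟨⟨hpre, hpal⟩, hmin⟩ := (exists_minLength (epal_ext w)).choose_spec
  exact eq_pseudoClosure hpre (isPseudoPal_true.2 hpal) fun v hv ↦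
    hmin v ⟨hv.1, isPseudoPal_true.1 hv.2⟩

end PseudoPalindrome

section Prefixes

/-- The directive sequence `(EERR)^ω`, starting at index 1: `w_n` is a pseudopalindrome of type
`wpType n`, where `true` stands for `E` and `false` for `R`. -/
def wpType (n : ℕ) : Bool := n % 4 = 1 ∨ n % 4 = 2

lemma wpType_eq_true {n : ℕ} : wpType n = true ↔ n % 4 = 1 ∨ n % 4 = 2 := by simp [wpType]

lemma wpType_eq_false {n : ℕ} : wpType n = false ↔ n % 4 = 0 ∨ n % 4 = 3 := by
  rw [← Bool.not_eq_true, wpType_eq_true]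
  omega

lemma wpType_add_four (n : ℕ) : wpType (n + 4) = wpType n := by simp [wpType]

lemma wpType_add_two (n : ℕ) : wpType (n + 2) = !wpType n := by
  rw [Bool.eq_not_iff, Ne, Bool.eq_iff_iff, wpType_eq_true, wpType_eq_true]; omega

lemma wpType_add_one_of_even {n : ℕ} (h : n % 2 = 0) : wpType (n + 1) = !wpType n := by
  rw [Bool.eq_not_iff, Ne, Bool.eq_iff_iff, wpType_eq_true, wpType_eq_true]; omega

lemma wpType_add_three_of_even {n : ℕ} (h : n % 2 = 0) : wpType (n + 3) = wpType n := by
  rw [wpType_add_two, wpType_add_one_of_even h, Bool.not_not]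

lemma wp_succ (n : ℕ) : wp (n + 1) = pseudoClosure (wpType (n + 1)) (wp n ++ [true]) := by
  rw [wp]
  split_ifs with h
  · rw [epalCl_eq, wpType_eq_true.2 h]
  · rw [palCl_eq, wpType_eq_false.2 (by omega)]

/-- A computable form of `wp`, on which small instances can be decided. -/
def wpCompute : ℕ → Word
  | 0 => []
  | n + 1 => pseudoClosure (wpType (n + 1)) (wpCompute n ++ [true])

lemma wp_eq_wpCompute (n : ℕ) : wp n = wpCompute n := by
  induction n with
  | zero => rfl
  | succ n ih => rw [wp_succ, ih, wpCompute]

/-- The length of `w_n`. -/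
noncomputable def wpLen (n : ℕ) : ℕ := (wp n).length

/-- The infinite word `u_p` as a function; `w_{i+1}` is long enough to contain the letter at `i`. -/
noncomputable def up (i : ℕ) : Bool := (wp (i + 1)).getD i false

lemma isPseudoPal_wp (n : ℕ) : IsPseudoPal (wpType n) (wp n) := by
  cases n with
  | zero => rfl
  | succ n => exact wp_succ n ▸ isPseudoPal_pseudoClosure

lemma wp_append_isPrefix (n : ℕ) : wp n ++ [true] <+: wp (n + 1) :=
  wp_succ n ▸ List.prefix_append _ _

lemma wp_isPrefix_of_le {m n : ℕ} (h : m ≤ n) : wp m <+: wp n := by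
  induction n, h using Nat.le_induction with
  | base => exact List.prefix_rfl
  | succ n _ ih => exact ih.trans ((List.prefix_append _ _).trans (wp_append_isPrefix n))

lemma wpLen_succ (n : ℕ) :
    wpLen (n + 1) = wpLen n + 1 + overhang (wpType (n + 1)) (wp n ++ [true]) := by
  simp [wpLen, wp_succ, length_pseudoClosure]

lemma wpLen_strictMono : StrictMono wpLen :=
  strictMono_nat_of_lt_succ fun n ↦ by rw [wpLen_succ]; omega

lemma le_wpLen (n : ℕ) : n ≤ wpLen n := wpLen_strictMono.le_apply

lemma getD_wp {n i : ℕ} (h : i < wpLen n) : (wp n).getD i false = up i := by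
  have getD_of_isPrefix {v w : Word} (hvw : v <+: w) (hi : i < v.length) :
      v.getD i false = w.getD i false := by
    obtain ⟨s, rfl⟩ := hvw
    rw [List.getD_append _ _ _ _ hi]
  rcases le_total n (i + 1) with hn | hn
  · exact getD_of_isPrefix (wp_isPrefix_of_le hn) h
  · exact (getD_of_isPrefix (wp_isPrefix_of_le hn) (le_wpLen (i + 1))).symm

lemma wp_eq_map_up (n : ℕ) : wp n = (List.range (wpLen n)).map up := by
  refine List.ext_getElem (by simp [wpLen]) fun i hi _ ↦ ?_
  rw [List.getElem_map, List.getElem_range, ← getD_wp hi, List.getD_eq_getElem]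

lemma wp_append_eq_map_up (n : ℕ) : wp n ++ [true] = (List.range (wpLen n + 1)).map up := by
  have hpre := wp_append_isPrefix n
  have hlt := wpLen_strictMono n.lt_succ_self
  rw [wp_eq_map_up (n + 1), List.prefix_iff_eq_take, ← List.map_take, List.take_range] at hpre
  rw [hpre]
  congr 2
  simp only [List.length_append, List.length_singleton]
  exact min_eq_left hlt

lemma up_wpLen (n : ℕ) : up (wpLen n) = true := by
  have h := wp_append_eq_map_up n
  rw [List.range_succ, List.map_append, ← wp_eq_map_up] at h
  simpa using h.symm

lemma up_zero : up 0 = true := by rw [up, wp_eq_wpCompute]; decide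
lemma up_one : up 1 = false := by rw [up, wp_eq_wpCompute]; decide
lemma up_two : up 2 = true := by rw [up, wp_eq_wpCompute]; decide
lemma up_three : up 3 = false := by rw [up, wp_eq_wpCompute]; decide

lemma wpLen_zero : wpLen 0 = 0 := by rw [wpLen, wp_eq_wpCompute]; decide
lemma wpLen_one : wpLen 1 = 2 := by rw [wpLen, wp_eq_wpCompute]; decide
lemma wpLen_two : wpLen 2 = 4 := by rw [wpLen, wp_eq_wpCompute]; decide
lemma wpLen_three : wpLen 3 = 5 := by rw [wpLen, wp_eq_wpCompute]; decide
lemma wpLen_four : wpLen 4 = 10 := by rw [wpLen, wp_eq_wpCompute]; decide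

lemma lt_wpLen {n : ℕ} (hn : 0 < n) : n < wpLen n := by
  have := wpLen_strictMono.add_le_nat (n - 1) 1
  rw [Nat.sub_add_cancel hn, wpLen_one] at this
  omega

end Prefixes

section PseudoPalindromicPrefixes

/-- The prefix of length `L` of `u_p` is a pseudopalindrome of type `e`. -/
def PseudoPalPrefix (e : Bool) (L : ℕ) : Prop := ∀ i j, i + j + 1 = L → up i = (e ^^ up j)

lemma pseudoPalPrefix_wpLen (n : ℕ) : PseudoPalPrefix (wpType n) (wpLen n) := by
  have h := isPseudoPal_wp n
  rwa [wp_eq_map_up, isPseudoPal_map_range_iff] at h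

/-- Reflecting in two pseudopalindromic prefixes gives a period if their types agree, and an
antiperiod if they differ. -/
lemma PseudoPalPrefix.up_shift {a b : Bool} {A B t : ℕ} (hA : PseudoPalPrefix a A)
    (hB : PseudoPalPrefix b B) (hAB : A ≤ B) (ht : t < A) :
    up (B - A + t) = ((a ^^ b) ^^ up t) := by
  rw [hB (B - A + t) (A - 1 - t) (by omega), hA (A - 1 - t) t (by omega)]
  cases a <;> cases b <;> simp

lemma isPseudoPal_drop_iff {e : Bool} (n k : ℕ) :
    IsPseudoPal e ((wp n ++ [true]).drop k) ↔
      ∀ i j, k ≤ i → k ≤ j → i + j = wpLen n + k → up i = (e ^^ up j) := by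
  have hdrop : (wp n ++ [true]).drop k =
      (List.range (wpLen n + 1 - k)).map fun i ↦ up (k + i) := by
    rw [wp_append_eq_map_up]
    exact List.ext_getElem (by simp) (by simp)
  rw [hdrop, isPseudoPal_map_range_iff]
  refine ⟨fun h i j hi hj hij ↦ ?_, fun h i j hij ↦ h _ _ (by omega) (by omega) (by omega)⟩
  have := h (i - k) (j - k) (by omega)
  rwa [Nat.add_sub_cancel' hi, Nat.add_sub_cancel' hj] at this

lemma wpLen_succ_le (n : ℕ) : wpLen (n + 1) ≤ 2 * wpLen n + 2 := by
  have := overhang_le_length (e := wpType (n + 1)) (w := wp n ++ [true])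
  rw [List.length_append, List.length_singleton, ← wpLen] at this
  rw [wpLen_succ]
  omega

lemma wpLen_succ_le_of_pseudoPalPrefix {n L : ℕ} (hL : wpLen n < L)
    (h : PseudoPalPrefix (wpType (n + 1)) L) : wpLen (n + 1) ≤ L := by
  have := overhang_le <| (isPseudoPal_drop_iff n (L - 1 - wpLen n)).2
    fun i j _ _ hij ↦ h i j (by omega)
  rw [wpLen_succ]
  omega

/-- The prefix `v` of length `M` gives rise, by reflection in `w_n`, to a pseudopalindromic suffix
of `w_n 1` of length `M + 2`, of the type used in step `n + 1`. -/
def ReflectsToSuffix (n M : ℕ) : Prop :=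
  PseudoPalPrefix (wpType (n + 1)) M ∧ up M = !(wpType n ^^ wpType (n + 1))

lemma isPseudoPal_drop_iff_reflectsToSuffix {n k : ℕ} (hk : k < wpLen n) :
    IsPseudoPal (wpType (n + 1)) ((wp n ++ [true]).drop k) ↔
      ReflectsToSuffix n (wpLen n - 1 - k) := by
  have reflect := pseudoPalPrefix_wpLen n
  rw [isPseudoPal_drop_iff]
  constructor
  · refine fun h ↦ ⟨fun i j hij ↦ ?_, ?_⟩
    · have := h (wpLen n - 1 - i) (wpLen n - 1 - j) (by omega) (by omega) (by omega)
      rwa [reflect (wpLen n - 1 - i) i (by omega), reflect (wpLen n - 1 - j) j (by omega),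
        Bool.xor_left_comm, Bool.xor_right_inj] at this
    · have := h k (wpLen n) le_rfl (by omega) (by omega)
      rw [reflect k (wpLen n - 1 - k) (by omega), up_wpLen] at this
      rw [← Bool.xor_right_inj (x := wpType n), this]
      cases wpType n <;> cases wpType (n + 1) <;> rfl
  · rintro ⟨hpal, hup⟩ i j hi hj hij
    have hends : up k = (wpType (n + 1) ^^ up (wpLen n)) := by
      rw [reflect k (wpLen n - 1 - k) (by omega), hup, up_wpLen]
      cases wpType n <;> cases wpType (n + 1) <;> rfl
    rcases hi.eq_or_lt with rfl | hi
    · rwa [show j = wpLen n by omega]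
    rcases hj.eq_or_lt with rfl | hj
    · rw [show i = wpLen n by omega, hends, ← Bool.xor_assoc, Bool.xor_self, Bool.false_xor]
    rw [reflect i (wpLen n - 1 - i) (by omega), reflect j (wpLen n - 1 - j) (by omega),
      hpal (wpLen n - 1 - i) (wpLen n - 1 - j) (by omega), Bool.xor_left_comm]

lemma reflectsToSuffix_of_overhang_lt {n : ℕ}
    (h : overhang (wpType (n + 1)) (wp n ++ [true]) < wpLen n) :
    ReflectsToSuffix n (wpLen n - 1 - overhang (wpType (n + 1)) (wp n ++ [true])) :=
  (isPseudoPal_drop_iff_reflectsToSuffix h).1 isPseudoPal_drop_overhang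

lemma wpLen_succ_of_reflectsToSuffix {n M : ℕ} (hM : M < wpLen n) (h : ReflectsToSuffix n M)
    (hmax : ∀ M', M < M' → M' < wpLen n → ¬ReflectsToSuffix n M') :
    wpLen (n + 1) + M = 2 * wpLen n := by
  have hle : overhang (wpType (n + 1)) (wp n ++ [true]) ≤ wpLen n - 1 - M :=
    overhang_le <| (isPseudoPal_drop_iff_reflectsToSuffix (by omega)).2 <| by
      rwa [show wpLen n - 1 - (wpLen n - 1 - M) = M by omega]
  have hge : wpLen n - 1 - M ≤ overhang (wpType (n + 1)) (wp n ++ [true]) := by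
    by_contra! hlt
    exact hmax _ (by omega) (by omega) (reflectsToSuffix_of_overhang_lt (by omega))
  rw [wpLen_succ]
  omega

lemma wpLen_succ_of_forall_not_reflectsToSuffix {n : ℕ} (htype : wpType (n + 1) = true)
    (hnone : ∀ M < wpLen n, ¬ReflectsToSuffix n M) : wpLen (n + 1) = 2 * wpLen n + 2 := by
  have hge : wpLen n ≤ overhang (wpType (n + 1)) (wp n ++ [true]) := by
    by_contra! hlt
    exact hnone _ (by omega) (reflectsToSuffix_of_overhang_lt hlt)
  have hne : overhang (wpType (n + 1)) (wp n ++ [true]) ≠ wpLen n := by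
    intro h
    have hlast := isPseudoPal_drop_overhang (e := wpType (n + 1)) (w := wp n ++ [true])
    rw [h, wpLen, List.drop_left, htype] at hlast
    exact absurd hlast (by decide)
  have := wpLen_succ_le n
  rw [wpLen_succ] at this ⊢
  omega

end PseudoPalindromicPrefixes

section Classification

/-- The pseudopalindromic prefixes of `u_p`: the empty word, the palindromes `1` and `101` (which
are not among the `w_j`), and the words `w_j`. -/
def IsListed (e : Bool) (M : ℕ) : Prop :=
  M = 0 ∨ (e = false ∧ (M = 1 ∨ M = 3)) ∨ ∃ j, M = wpLen j ∧ e = wpType j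

/-- Every pseudopalindromic prefix of `w_n` is listed. -/
def Classified (n : ℕ) : Prop := ∀ e, ∀ M ≤ wpLen n, PseudoPalPrefix e M → IsListed e M

lemma Classified.mono {m n : ℕ} (h : Classified n) (hmn : m ≤ n) : Classified m :=
  fun e M hM ↦ h e M (hM.trans (wpLen_strictMono.monotone hmn))

lemma classified_four : Classified 4 := by
  have h : ∀ e, ∀ M ≤ 10, mirror e ((wpCompute 4).take M) = (wpCompute 4).take M →
      M = 0 ∨ (e = false ∧ (M = 1 ∨ M = 3)) ∨
        ∃ j ≤ 4, M = (wpCompute j).length ∧ e = wpType j := by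
    decide +kernel
  intro e M hM hpal
  rw [wpLen_four] at hM
  have htake : (wpCompute 4).take M = (List.range M).map up := by
    rw [← wp_eq_wpCompute, wp_eq_map_up, wpLen_four, ← List.map_take, List.take_range,
      min_eq_left hM]
  rcases h e M hM (htake ▸ (isPseudoPal_map_range_iff up M).2 hpal) with h | h | ⟨j, -, hj, he⟩
  · exact Or.inl h
  · exact Or.inr (Or.inl h)
  · exact Or.inr (Or.inr ⟨j, by rw [hj, wpLen, wp_eq_wpCompute], he⟩)

variable {n : ℕ}

lemma Classified.wpLen_succ_of_mod_four_eq_zero (h : Classified n) (hn : n % 4 = 0) :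
    wpLen (n + 1) = 2 * wpLen n + 2 := by
  have htype : wpType n = false := wpType_eq_false.2 (Or.inl hn)
  have htype' : wpType (n + 1) = true := wpType_eq_true.2 (by omega)
  refine wpLen_succ_of_forall_not_reflectsToSuffix htype' fun M hM ⟨hpal, hup⟩ ↦ ?_
  rw [htype'] at hpal
  have hup' : up M = false := by rw [hup, htype, htype']; rfl
  rcases h _ _ hM.le hpal with rfl | ⟨h, -⟩ | ⟨j, rfl, -⟩
  · simp [up_zero] at hup'
  · simp at h
  · simp [up_wpLen] at hup'

lemma Classified.wpLen_succ_of_mod_four_eq_two (h : Classified n) (hn : n % 4 = 2) :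
    wpLen (n + 1) + 3 = 2 * wpLen n := by
  have htype : wpType n = true := wpType_eq_true.2 (Or.inr hn)
  have htype' : wpType (n + 1) = false := wpType_eq_false.2 (by omega)
  have hlen : 4 ≤ wpLen n := wpLen_two ▸ wpLen_strictMono.monotone (by omega)
  refine wpLen_succ_of_reflectsToSuffix (by omega) ⟨fun i j hij ↦ ?_, ?_⟩
    fun M hM hM' ⟨hpal, hup⟩ ↦ ?_
  · obtain ⟨rfl, rfl⟩ | ⟨rfl, rfl⟩ | ⟨rfl, rfl⟩ :
        i = 0 ∧ j = 2 ∨ i = 1 ∧ j = 1 ∨ i = 2 ∧ j = 0 := by omega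
    all_goals simp [htype', up_zero, up_two]
  · simp [htype, htype', up_three]
  · rcases h _ _ hM'.le hpal with rfl | ⟨-, h⟩ | ⟨j, rfl, -⟩
    · omega
    · omega
    · simp [htype, htype', up_wpLen] at hup

lemma Classified.wpLen_add_four_of_even {m : ℕ} (h : Classified (m + 3)) (hm : m % 2 = 0) :
    wpLen (m + 4) + wpLen m = 2 * wpLen (m + 3) := by
  have htype : wpType (m + 3) = wpType m := wpType_add_three_of_even hm
  have htype' : wpType (m + 3 + 1) = wpType m := wpType_add_four m
  refine wpLen_succ_of_reflectsToSuffix (wpLen_strictMono (by omega))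
    ⟨htype' ▸ pseudoPalPrefix_wpLen m, ?_⟩ fun M hM hM' ⟨hpal, hup⟩ ↦ ?_
  · rw [up_wpLen, htype, htype', Bool.xor_self, Bool.not_false]
  rw [htype, htype', Bool.xor_self, Bool.not_false] at hup
  rcases h _ _ hM'.le hpal with rfl | ⟨-, rfl | rfl⟩ | ⟨j, rfl, hj⟩
  · omega
  · simp [up_one] at hup
  · simp [up_three] at hup
  · have hmj := wpLen_strictMono.lt_iff_lt.1 hM
    have hjm := wpLen_strictMono.lt_iff_lt.1 hM'
    rw [htype'] at hj
    obtain rfl | rfl : j = m + 1 ∨ j = m + 2 := by omega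
    · simp [wpType_add_one_of_even hm] at hj
    · simp [wpType_add_two] at hj

lemma Classified.wpLen_odd_iff (h : Classified n) {j : ℕ} (hj : j ≤ n + 1) :
    wpLen j % 2 = 1 ↔ j % 4 = 3 := by
  induction j using Nat.strong_induction_on with
  | _ j ih =>
    rcases lt_or_ge j 4 with hlt | hge
    · interval_cases j <;> simp [wpLen_zero, wpLen_one, wpLen_two, wpLen_three]
    obtain ⟨m, rfl⟩ : ∃ m, j = m + 4 := ⟨j - 4, by omega⟩
    have hm : Classified (m + 3) := h.mono (by omega)
    rcases Nat.even_or_odd' m with ⟨i, rfl | rfl⟩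
    · have := hm.wpLen_add_four_of_even (by omega)
      have := ih (2 * i) (by omega) (by omega)
      omega
    · rcases (by omega : (2 * i + 1 + 3) % 4 = 0 ∨ (2 * i + 1 + 3) % 4 = 2) with hi | hi
      · have : wpLen (2 * i + 1 + 4) = _ := hm.wpLen_succ_of_mod_four_eq_zero hi
        omega
      · have : wpLen (2 * i + 1 + 4) + 3 = _ := hm.wpLen_succ_of_mod_four_eq_two hi
        omega

lemma Classified.up_half_sub_one (h : Classified n) {j : ℕ} (hj : j ≤ n + 1) (hmod : j % 4 = 1) :
    up (wpLen j / 2 - 1) = true := by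
  obtain ⟨m, rfl⟩ : ∃ m, j = m + 1 := ⟨j - 1, by omega⟩
  have := (h.mono (m := m) (by omega)).wpLen_succ_of_mod_four_eq_zero (by omega)
  rw [show wpLen (m + 1) / 2 - 1 = wpLen m by omega, up_wpLen]

lemma Classified.up_half_sub_two (h : Classified n) {j : ℕ} (hj : j ≤ n + 1) (htwo : 2 ≤ j)
    (hmod : j % 4 = 1 ∨ j % 4 = 2) : up (wpLen j / 2 - 2) = true := by
  induction j using Nat.strong_induction_on with
  | _ j ih =>
    rcases htwo.eq_or_lt with rfl | htwo
    · rw [wpLen_two, up_zero]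
    rcases hmod with hmod | hmod
    · obtain ⟨m, rfl⟩ : ∃ m, j = m + 1 := ⟨j - 1, by omega⟩
      have hrec := (h.mono (m := m) (by omega)).wpLen_succ_of_mod_four_eq_zero (by omega)
      have := le_wpLen m
      have hlast := pseudoPalPrefix_wpLen m (wpLen m - 1) 0 (by omega)
      rw [show wpLen (m + 1) / 2 - 2 = wpLen m - 1 by omega, hlast, up_zero,
        wpType_eq_false.2 (by omega)]
      rfl
    · obtain ⟨m, rfl⟩ : ∃ m, j = m + 4 := ⟨j - 4, by omega⟩
      have hrec := (h.mono (m := m + 3) (by omega)).wpLen_add_four_of_even (by omega)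
      have hlen : 4 ≤ wpLen m := wpLen_two ▸ wpLen_strictMono.monotone (by omega)
      have hlt : wpLen m < wpLen (m + 3) := wpLen_strictMono (by omega)
      have hshift := (pseudoPalPrefix_wpLen m).up_shift (pseudoPalPrefix_wpLen (m + 3)) hlt.le
        (t := wpLen m / 2 - 2) (by omega)
      rw [show wpLen (m + 4) / 2 - 2 = wpLen (m + 3) - wpLen m + (wpLen m / 2 - 2) by omega,
        hshift, ih m (by omega) (by omega) (by omega) (by omega), wpType_eq_true.2 (by omega),
        wpType_eq_true.2 (by omega)]
      rfl

lemma Classified.up_half (h : Classified n) {j : ℕ} (hj : j ≤ n + 1) (hmod : j % 4 = 3) :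
    up (wpLen j / 2) = true := by
  obtain ⟨m, rfl⟩ : ∃ m, j = m + 1 := ⟨j - 1, by omega⟩
  have hrec := (h.mono (m := m) (by omega)).wpLen_succ_of_mod_four_eq_two (by omega)
  have hlen : 4 ≤ wpLen m := wpLen_two ▸ wpLen_strictMono.monotone (by omega)
  rw [show wpLen (m + 1) / 2 = wpLen m - 2 by omega,
    pseudoPalPrefix_wpLen m (wpLen m - 2) 1 (by omega), up_one, wpType_eq_true.2 (by omega)]
  rfl

/-- Reflecting in both prefixes gives the antiperiod `L - p`, which carries the prefix of length `x`
to the central factor of length `x` of the prefix of length `L`. -/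
lemma PseudoPalPrefix.exists_central_complement {e : Bool} {L p : ℕ} (hL : PseudoPalPrefix e L)
    (hp : PseudoPalPrefix (!e) p) (hpL : p ≤ L) (hLp : L ≤ 2 * p) :
    ∃ x, 2 * p = L + x ∧ PseudoPalPrefix e x ∧
      ∀ d ≤ x / 2, x / 2 - d < p → up (L / 2 - d) = !up (x / 2 - d) := by
  have anti (t : ℕ) (ht : t < p) : up (L - p + t) = !up t := by
    rw [hp.up_shift hL hpL ht]
    cases e <;> simp
  obtain ⟨x, hx⟩ : ∃ x, 2 * p = L + x := ⟨2 * p - L, by omega⟩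
  refine ⟨x, hx, fun i j hij ↦ ?_, fun d hd hlt ↦ ?_⟩
  · have := hp i (L - p + j) (by omega)
    rw [anti j (by omega)] at this
    rw [this]
    cases e <;> simp
  · rw [← anti _ hlt]
    congr 1
    omega

lemma Classified.wpLen_succ_cases (h : Classified n) (hn : 3 ≤ n) :
    n % 4 = 0 ∧ wpLen (n + 1) = 2 * wpLen n + 2 ∨ n % 4 = 2 ∧ wpLen (n + 1) + 3 = 2 * wpLen n ∨
      n % 2 = 1 ∧ wpLen (n + 1) + wpLen (n - 3) = 2 * wpLen n := by
  rcases (by omega : n % 4 = 0 ∨ n % 4 = 2 ∨ n % 2 = 1) with hmod | hmod | hmod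
  · exact Or.inl ⟨hmod, h.wpLen_succ_of_mod_four_eq_zero hmod⟩
  · exact Or.inr (Or.inl ⟨hmod, h.wpLen_succ_of_mod_four_eq_two hmod⟩)
  · obtain ⟨m, rfl⟩ : ∃ m, n = m + 3 := ⟨n - 3, by omega⟩
    exact Or.inr (Or.inr ⟨hmod, h.wpLen_add_four_of_even (by omega)⟩)

lemma Classified.exists_central_wp (h : Classified n) (hn : 4 ≤ n) {p : ℕ} (hnp : wpLen n < p)
    (hp : p ≤ wpLen (n + 1)) (hpal : PseudoPalPrefix (!wpType (n + 1)) p) :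
    ∃ j ≤ n, wpType j = wpType (n + 1) ∧ 2 * p = wpLen (n + 1) + wpLen j ∧
      ∀ d ≤ wpLen j / 2, up (wpLen (n + 1) / 2 - d) = !up (wpLen j / 2 - d) := by
  have hlen := wpLen_succ_le n
  have hpos := le_wpLen n
  obtain ⟨x, hx, hxpal, hcompl⟩ :=
    (pseudoPalPrefix_wpLen (n + 1)).exists_central_complement hpal hp (by omega)
  have hxn : x ≤ wpLen n := by
    by_contra! hlt
    have := wpLen_succ_le_of_pseudoPalPrefix hlt hxpal
    have := hcompl (x / 2) le_rfl (by omega)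
    simp [show wpLen (n + 1) / 2 = x / 2 by omega] at this
  have hrec := h.wpLen_succ_cases (by omega)
  rcases h _ x hxn hxpal with rfl | ⟨htype, hx13⟩ | ⟨j, rfl, htype⟩
  · obtain ⟨hmod, hsucc⟩ : n % 4 = 0 ∧ wpLen (n + 1) = 2 * wpLen n + 2 := by omega
    have htype : wpType n = false := wpType_eq_false.2 (Or.inl hmod)
    have htype' : wpType (n + 1) = true := wpType_eq_true.2 (by omega)
    have hends := hpal (wpLen n - 1) 1 (by omega)
    rw [pseudoPalPrefix_wpLen n (wpLen n - 1) 0 (by omega), htype, htype', up_zero, up_one] at hends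
    simp at hends
  · have := le_wpLen (n - 3)
    have := wpType_eq_false.1 htype
    omega
  · exact ⟨j, wpLen_strictMono.le_iff_le.1 hxn, htype.symm, hx, fun d hd ↦ hcompl d hd (by omega)⟩

lemma Classified.le_of_pseudoPalPrefix_not_wpType (h : Classified n) (hn : 4 ≤ n) {p : ℕ}
    (hp : p ≤ wpLen (n + 1)) (hpal : PseudoPalPrefix (!wpType (n + 1)) p) : p ≤ wpLen n := by
  by_contra! hnp
  obtain ⟨j, hjn, htype, hlen, hcompl⟩ := h.exists_central_wp hn hnp hp hpal
  have hmod : j % 4 = 1 ∨ j % 4 = 2 ↔ (n + 1) % 4 = 1 ∨ (n + 1) % 4 = 2 := by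
    rw [← wpType_eq_true, ← wpType_eq_true, htype]
  have hparity := h.wpLen_odd_iff (j := j) (by omega)
  have hparity' := h.wpLen_odd_iff (j := n + 1) le_rfl
  rcases h.wpLen_succ_cases (by omega) with ⟨hn4, -⟩ | ⟨hn4, -⟩ | ⟨hn2, hrec⟩
  · have hlen := lt_wpLen (n := j) (by omega)
    rcases (by omega : j % 4 = 1 ∨ j % 4 = 2) with hj | hj
    · have := hcompl 1 (by omega)
      rw [h.up_half_sub_one le_rfl (by omega), h.up_half_sub_one (by omega) hj] at this
      simp at this
    · have := hcompl 2 (by omega)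
      rw [h.up_half_sub_two le_rfl (by omega) (by omega),
        h.up_half_sub_two (by omega) (by omega) (by omega)] at this
      simp at this
  · have := hcompl 0 (by omega)
    rw [Nat.sub_zero, Nat.sub_zero, h.up_half le_rfl (by omega),
      h.up_half (by omega) (by omega)] at this
    simp at this
  · have hj : n - 3 < j := wpLen_strictMono.lt_iff_lt.1 (by omega)
    obtain rfl : j = n := by omega
    have := le_wpLen j
    have := hcompl 2 (by omega)
    rw [h.up_half_sub_two le_rfl (by omega) (by omega),
      h.up_half_sub_two (by omega) (by omega) (by omega)] at this
    simp at this

lemma Classified.succ (h : Classified n) (hn : 4 ≤ n) : Classified (n + 1) := by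
  intro e p hp hpal
  rcases le_or_gt p (wpLen n) with hle | hlt
  · exact h e p hle hpal
  rcases Bool.eq_or_eq_not e (wpType (n + 1)) with rfl | rfl
  · exact Or.inr (Or.inr ⟨n + 1, hp.antisymm (wpLen_succ_le_of_pseudoPalPrefix hlt hpal), rfl⟩)
  · exact absurd hlt (h.le_of_pseudoPalPrefix_not_wpType hn hp hpal).not_gt

lemma classified (n : ℕ) : Classified n := by
  rcases le_total n 4 with hn | hn
  · exact classified_four.mono hn
  · induction n, hn using Nat.le_induction with
    | base => exact classified_four
    | succ n hn ih => exact ih.succ hn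

lemma wpLen_add_five_of_even {m : ℕ} (hm : m % 2 = 0) :
    wpLen (m + 5) + 2 * wpLen m = wpLen (m + 1) + 2 * wpLen (m + 4) := by
  rcases (by omega : m % 4 = 0 ∨ m % 4 = 2) with hmod | hmod
  · have := (classified m).wpLen_succ_of_mod_four_eq_zero hmod
    have : wpLen (m + 5) = _ :=
      (classified (m + 4)).wpLen_succ_of_mod_four_eq_zero (by omega)
    omega
  · have := (classified m).wpLen_succ_of_mod_four_eq_two hmod
    have : wpLen (m + 5) + 3 = _ :=
      (classified (m + 4)).wpLen_succ_of_mod_four_eq_two (by omega)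
    omega

end Classification

section Factors

variable {v w : Word}

lemma FactorUp.of_isInfix (hw : FactorUp w) (hvw : v <:+: w) : FactorUp v :=
  hw.imp fun _ ↦ hvw.trans

lemma factorUp_map_up (i n : ℕ) : FactorUp ((List.range n).map fun t ↦ up (i + t)) := by
  refine ⟨i + n, ?_⟩
  obtain ⟨k, hk⟩ := Nat.exists_eq_add_of_le (le_wpLen (i + n))
  rw [wp_eq_map_up, hk, List.range_add, List.range_add]
  simp only [List.map_append, List.map_map, Function.comp_def]
  exact List.infix_append _ _ _

lemma factorUp_cons_map_range {f : ℕ → Bool} {i n : ℕ} (h : ∀ t < n, up (i + 1 + t) = f t) :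
    FactorUp (up i :: (List.range n).map f) := by
  have hmap : (List.range n).map f = (List.range n).map fun t ↦ up (i + (t + 1)) :=
    List.map_congr_left fun t ht ↦ by
      rw [← h t (List.mem_range.1 ht), Nat.add_right_comm, Nat.add_assoc]
  have hfac := factorUp_map_up i (n + 1)
  rwa [List.range_succ_eq_map, List.map_cons, List.map_map, Nat.add_zero, Function.comp_def,
    ← hmap] at hfac

lemma exists_wpType_eq (e : Bool) (n : ℕ) : ∃ m ≥ n, wpType m = e := by
  cases e
  · exact ⟨4 * n, by omega, wpType_eq_false.2 (by omega)⟩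
  · exact ⟨4 * n + 1, by omega, wpType_eq_true.2 (by omega)⟩

protected lemma FactorUp.mirror (h : FactorUp v) (e : Bool) : FactorUp (mirror e v) := by
  obtain ⟨n, hn⟩ := h
  obtain ⟨m, hm, rfl⟩ := exists_wpType_eq e n
  refine ⟨m, ?_⟩
  rw [← isPseudoPal_wp m]
  exact List.reverse_infix.2 ((hn.trans (wp_isPrefix_of_le hm).isInfix).map _)

lemma FactorUp.map_not (h : FactorUp v) : FactorUp (v.map Bool.not) :=
  mirror_false_mirror_true ▸ (h.mirror true).mirror false

lemma FactorUp.exists_append (h : FactorUp v) : ∃ c, FactorUp (v ++ [c]) := by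
  obtain ⟨n, s, t, hst⟩ := h
  have hfac : FactorUp (s ++ v ++ (t ++ [true])) := by
    rw [← List.append_assoc, hst]
    exact ⟨n + 1, (wp_append_isPrefix n).isInfix⟩
  obtain ⟨c, t', ht⟩ := List.exists_cons_of_ne_nil (l := t ++ [true]) (by simp)
  exact ⟨c, hfac.of_isInfix ⟨s, t', by simp [ht]⟩⟩

lemma FactorUp.exists_cons (h : FactorUp v) : ∃ c, FactorUp (c :: v) := by
  obtain ⟨c, hc⟩ := (h.mirror false).exists_append
  refine ⟨c, ?_⟩
  simpa [mirror_append, mirror_mirror, mirror] using hc.mirror false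

/-- Left special factors: those extended to the left by both letters. -/
def LeftSpecial (v : Word) : Prop := ∀ c, FactorUp (c :: v)

lemma LeftSpecial.map_not (h : LeftSpecial v) : LeftSpecial (v.map Bool.not) := fun c ↦ by
  simpa using (h !c).map_not

lemma leftSpecial_map_up (n : ℕ) : LeftSpecial ((List.range n).map up) := by
  intro c
  obtain ⟨m, hm, htype⟩ := exists_wpType_eq (!c) n
  have hfac : FactorUp (mirror (wpType m) (wp m ++ [true])) :=
    FactorUp.mirror ⟨m + 1, (wp_append_isPrefix m).isInfix⟩ _
  rw [mirror_append, isPseudoPal_wp, htype] at hfac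
  have hpre : (List.range n).map up <+: wp m := by
    rw [wp_eq_map_up]
    obtain ⟨k, hk⟩ := Nat.exists_eq_add_of_le (hm.le.trans (le_wpLen m))
    rw [hk, List.range_add, List.map_append]
    exact List.prefix_append _ _
  refine hfac.of_isInfix (List.IsPrefix.isInfix ?_)
  simpa [mirror, List.cons_prefix_cons] using hpre

end Factors

section TwistedWord

/-- The word `w_{m+1}` followed by the complement of the continuation of `u_p` after `w_m`. For even
`m` its prefixes of length at most `wpLen (m + 3)` are left special. -/
noncomputable def twist (m t : ℕ) : Bool :=
  if t < wpLen (m + 1) then up t else !up (t - (wpLen (m + 1) - wpLen m))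

lemma up_wpLen_add_one {m : ℕ} (hm : m % 4 = 0) : up (wpLen m + 1) = false := by
  have := (classified m).wpLen_succ_of_mod_four_eq_zero hm
  rw [pseudoPalPrefix_wpLen (m + 1) (wpLen m + 1) (wpLen m) (by omega), up_wpLen,
    wpType_eq_true.2 (by omega)]
  rfl

variable {m t : ℕ}

lemma twist_of_le (hm : m % 2 = 0) (ht : wpLen (m + 1) - wpLen m ≤ t) :
    twist m t = !up (t - (wpLen (m + 1) - wpLen m)) := by
  rw [twist, ite_eq_right_iff]
  intro hlt
  have hshift := (pseudoPalPrefix_wpLen m).up_shift (pseudoPalPrefix_wpLen (m + 1))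
    (wpLen_strictMono m.lt_succ_self).le (t := t - (wpLen (m + 1) - wpLen m)) (by omega)
  rw [Nat.add_sub_cancel' ht] at hshift
  rw [hshift, wpType_add_one_of_even hm]
  cases wpType m <;> simp

lemma up_eq_twist (hm : m % 2 = 0) (ht : t < wpLen (m + 3)) :
    up (wpLen (m + 4) - wpLen m + t) = twist m t := by
  have hlen := wpLen_add_five_of_even hm
  have hle : wpLen m < wpLen (m + 1) := wpLen_strictMono (by omega)
  have hle' : wpLen (m + 1) < wpLen (m + 3) := wpLen_strictMono (by omega)
  have hle'' : wpLen (m + 3) < wpLen (m + 4) := wpLen_strictMono (by omega)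
  rcases le_or_gt (wpLen (m + 1) - wpLen m) t with hge | hlt
  · have hshift := (pseudoPalPrefix_wpLen (m + 4)).up_shift (pseudoPalPrefix_wpLen (m + 5))
      (wpLen_strictMono (by omega)).le (t := t - (wpLen (m + 1) - wpLen m)) (by omega)
    rw [twist_of_le hm hge, show wpLen (m + 4) - wpLen m + t =
      wpLen (m + 5) - wpLen (m + 4) + (t - (wpLen (m + 1) - wpLen m)) by omega, hshift,
      wpType_add_one_of_even (n := m + 4) (by omega)]
    cases wpType (m + 4) <;> simp
  rw [twist, if_pos (by omega)]
  rcases lt_or_ge t (wpLen m) with ht | ht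
  · rw [(pseudoPalPrefix_wpLen m).up_shift (pseudoPalPrefix_wpLen (m + 4)) (by omega) ht,
      wpType_add_four, Bool.xor_self, Bool.false_xor]
  have hmod : m % 4 = 0 := by
    by_contra hmod
    have := (classified m).wpLen_succ_of_mod_four_eq_two (by omega)
    omega
  have := (classified m).wpLen_succ_of_mod_four_eq_zero hmod
  obtain rfl | rfl : t = wpLen m ∨ t = wpLen m + 1 := by omega
  · rw [Nat.sub_add_cancel (by omega), up_wpLen, up_wpLen]
  · rw [← add_assoc, Nat.sub_add_cancel (by omega), up_wpLen_add_one (by omega),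
      up_wpLen_add_one hmod]

lemma up_eq_not_twist (hm : m % 2 = 0) (ht : t < wpLen (m + 3)) :
    up (wpLen (m + 3) - wpLen (m + 1) + t) = !twist m t := by
  rw [twist]
  split_ifs with hlt
  · rw [(pseudoPalPrefix_wpLen (m + 1)).up_shift (pseudoPalPrefix_wpLen (m + 3))
      (wpLen_strictMono (by omega)).le hlt, wpType_add_three_of_even hm, wpType_add_one_of_even hm]
    cases wpType m <;> simp
  · have hrec := (classified (m + 3)).wpLen_add_four_of_even hm
    have hle : wpLen m < wpLen (m + 1) := wpLen_strictMono (by omega)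
    have hle' : wpLen (m + 1) < wpLen (m + 3) := wpLen_strictMono (by omega)
    have hshift := (pseudoPalPrefix_wpLen (m + 3)).up_shift (pseudoPalPrefix_wpLen (m + 4))
      (by omega) (t := t - (wpLen (m + 1) - wpLen m)) (by omega)
    rw [wpType_add_three_of_even hm, wpType_add_four, Bool.xor_self, Bool.false_xor] at hshift
    rw [Bool.not_not, ← hshift]
    congr 1
    omega

lemma up_wpLen_sub_wpLen_sub_one {j n : ℕ} (hjn : j < n) :
    up (wpLen n - wpLen j - 1) = !wpType n := by
  have := wpLen_strictMono hjn
  rw [pseudoPalPrefix_wpLen n _ (wpLen j) (by omega), up_wpLen, Bool.xor_true]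

lemma leftSpecial_map_twist (hm : m % 2 = 0) {n : ℕ} (hn : n ≤ wpLen (m + 3)) :
    LeftSpecial ((List.range n).map (twist m)) := by
  have hlt := wpLen_strictMono (show m < m + 4 by omega)
  have hlt' := wpLen_strictMono (show m + 1 < m + 3 by omega)
  have direct : FactorUp ((!wpType m) :: (List.range n).map (twist m)) := by
    rw [← wpType_add_four, ← up_wpLen_sub_wpLen_sub_one (show m < m + 4 by omega)]
    refine factorUp_cons_map_range fun t ht ↦ ?_
    rw [Nat.sub_add_cancel (by omega), up_eq_twist hm (by omega)]
  have complemented : FactorUp ((!wpType m) :: (List.range n).map fun t ↦ !twist m t) := by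
    rw [← wpType_add_three_of_even hm, ← up_wpLen_sub_wpLen_sub_one (show m + 1 < m + 3 by omega)]
    refine factorUp_cons_map_range fun t ht ↦ ?_
    rw [Nat.sub_add_cancel (by omega), up_eq_not_twist hm (by omega)]
  intro c
  rcases Bool.eq_or_eq_not c (wpType m) with rfl | rfl
  · simpa [Function.comp_def] using complemented.map_not
  · exact direct

end TwistedWord

section Complexity

variable {n : ℕ}

lemma finite_factorUp (n : ℕ) : {v | FactorUp v ∧ v.length = n}.Finite :=
  (List.finite_length_eq Bool n).subset fun _ hv ↦ hv.2

lemma ncard_le_cp {S : Set Word} (hS : ∀ v ∈ S, FactorUp v ∧ v.length = n) : S.ncard ≤ Cp n :=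
  Set.ncard_le_ncard hS (finite_factorUp n)

lemma cp_add_ncard_le {S : Set Word} (hS : ∀ v ∈ S, LeftSpecial v ∧ v.length = n) :
    Cp n + S.ncard ≤ Cp (n + 1) := by
  choose! c hc using fun v (hv : FactorUp v) ↦ hv.exists_cons
  have hfin : S.Finite := (List.finite_length_eq Bool n).subset fun v hv ↦ (hS v hv).2
  have inj (f : Word → Bool) : Function.Injective fun v ↦ f v :: v :=
    fun v w h ↦ List.tail_eq_of_cons_eq h
  have hdisj : Disjoint ((fun v ↦ c v :: v) '' {v | FactorUp v ∧ v.length = n})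
      ((fun v ↦ (!c v) :: v) '' S) := by
    rw [Set.disjoint_left]
    rintro _ ⟨v, -, rfl⟩ ⟨w, -, h⟩
    obtain ⟨h, rfl⟩ := List.cons.inj h
    simp at h
  rw [Cp, ← Set.ncard_image_of_injective _ (inj c), ← Set.ncard_image_of_injective S (inj (!c ·)),
    ← Set.ncard_union_eq hdisj ((finite_factorUp n).image _) (hfin.image _)]
  refine ncard_le_cp ?_
  rintro _ (⟨v, ⟨hv, hlen⟩, rfl⟩ | ⟨v, hv, rfl⟩)
  · exact ⟨hc v hv, by simp [hlen]⟩
  · exact ⟨(hS v hv).1 _, by simp [(hS v hv).2]⟩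

lemma cp_add_two_mul_ncard_le {S : Set Word}
    (hS : ∀ v ∈ S, LeftSpecial v ∧ v.length = n ∧ v.head? = some true) :
    Cp n + 2 * S.ncard ≤ Cp (n + 1) := by
  have hfin : S.Finite := (List.finite_length_eq Bool n).subset fun v hv ↦ (hS v hv).2.1
  have hdisj : Disjoint S (List.map Bool.not '' S) := by
    rw [Set.disjoint_left]
    rintro _ hv ⟨w, hw, rfl⟩
    have := (hS _ hv).2.2
    rw [List.head?_map, (hS w hw).2.2] at this
    simp at this
  have hncard : (List.map Bool.not '' S).ncard = S.ncard :=
    Set.ncard_image_of_injective S (List.map_injective_iff.2 fun _ _ ↦ Bool.not_inj)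
  have hunion : (S ∪ List.map Bool.not '' S).ncard = 2 * S.ncard := by
    rw [Set.ncard_union_eq hdisj hfin (hfin.image _), hncard, two_mul]
  rw [← hunion]
  refine cp_add_ncard_le ?_
  rintro _ (hv | ⟨v, hv, rfl⟩)
  · exact ⟨(hS _ hv).1, (hS _ hv).2.1⟩
  · exact ⟨(hS v hv).1.map_not, by rw [List.length_map, (hS v hv).2.1]⟩

lemma cp_add_four_le (hn : 5 < n) : Cp n + 4 ≤ Cp (n + 1) := by
  have hmono : StrictMono fun i ↦ wpLen (2 * i + 3) := fun i j hij ↦ wpLen_strictMono (by omega)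
  obtain ⟨i, hlt, hle⟩ := hmono.exists_between_of_tendsto_atTop hmono.tendsto_atTop
    (wpLen_three.trans_lt hn)
  have hne : (List.range n).map up ≠ (List.range n).map (twist (2 * i + 2)) := fun h ↦ by
    have := List.map_inj_left.1 h _ (List.mem_range.2 hlt)
    have hsub : wpLen (2 * i + 3) - (wpLen (2 * i + 3) - wpLen (2 * i + 2)) = wpLen (2 * i + 2) :=
      Nat.sub_sub_self (wpLen_strictMono.monotone (by omega))
    simp [twist, hsub, up_wpLen] at this
  have hhead {f : ℕ → Bool} (hf : f 0 = true) : ((List.range n).map f).head? = some true := by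
    simp [List.head?_range, show n ≠ 0 by omega, hf]
  have htwist : twist (2 * i + 2) 0 = true := by
    rw [twist, if_pos ((Nat.zero_le _).trans_lt (lt_wpLen (by omega))), up_zero]
  have hgrowth := cp_add_two_mul_ncard_le (n := n)
    (S := {(List.range n).map up, (List.range n).map (twist (2 * i + 2))}) <| by
      rintro _ (rfl | rfl)
      · exact ⟨leftSpecial_map_up n, by simp, hhead up_zero⟩
      · exact ⟨leftSpecial_map_twist (by omega) hle, by simp, hhead htwist⟩
  rwa [Set.ncard_pair hne] at hgrowth

lemma forty_lt_cp_ten : 40 < Cp 10 := by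
  -- Up to complement, every factor of length 10 occurs in `w_7`.
  let windows := ((wpCompute 7).tails.map (List.take 10)).filter (List.length · = 10)
  have hwindows : ∀ v ∈ windows, FactorUp v ∧ v.length = 10 := by
    intro v hv
    obtain ⟨hv, hlen⟩ := List.mem_filter.1 hv
    obtain ⟨s, hs, rfl⟩ := List.mem_map.1 hv
    refine ⟨⟨7, ?_⟩, by simpa using hlen⟩
    rw [wp_eq_wpCompute]
    exact (List.take_prefix _ _).isInfix.trans ((List.mem_tails _ _).1 hs).isInfix
  let S := (windows ++ windows.map (List.map Bool.not)).toFinset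
  have hcard : S.card = 42 := by decide +kernel
  have hle : (S : Set Word).ncard ≤ Cp 10 := by
    refine ncard_le_cp fun v hv ↦ ?_
    rcases List.mem_append.1 (List.mem_toFinset.1 hv) with hv | hv
    · exact hwindows v hv
    · obtain ⟨w, hw, rfl⟩ := List.mem_map.1 hv
      exact ⟨(hwindows w hw).1.map_not, by rw [List.length_map, (hwindows w hw).2]⟩
  rw [Set.ncard_coe_finset] at hle
  omega

end Complexity

/-- the factor complexity of `u_p = u(1^ω,(EERR)^ω)` satisfies
`C(n) > 4n` for all `n ≥ 10`. -/
theorem complexity_gt_four_n (n : ℕ) (hn : 10 ≤ n) : 4 * n < Cp n := by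
  induction n, hn using Nat.le_induction with
  | base => exact forty_lt_cp_ten
  | succ n hn ih =>
    have := cp_add_four_le (n := n) (by omega)
    omega
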